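/- Let α < 1, β > 0, c > 0, τ_θ > 0 and, for τ < β/√c, set ψ_c(τ) = (β/√c - τ)/(1-α) and I_c(τ) = (1/2)·log((τ + ψ_c(τ))/τ_θ). Then I_c'(τ) = -α/(2(1-α)(τ + ψ_c(τ))). Hence I_c is strictly increasing if α < 0, strictly decreasing if 0 < α < 1, and constant if α = 0. -/

import Mathlib

theorem stmt_17 (α β c τθ : ℝ) (hα : α < 1) (hβ : 0 < β) (hc : 0 < c) (hτθ : 0 < τθ) :
    let ψ : ℝ → ℝ := fun τ => (β/Real.sqrt c - τ)/(1-α)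
    let I : ℝ → ℝ := fun τ => (1/2)*Real.log ((τ + ψ τ)/τθ)
    (∀ τ ∈ Set.Ico (0:ℝ) (β/Real.sqrt c),
      HasDerivAt I (-α/(2*(1-α)*(τ + ψ τ))) τ) ∧
    (α < 0 → StrictMonoOn I (Set.Ico 0 (β/Real.sqrt c))) ∧
    (0 < α → StrictAntiOn I (Set.Ico 0 (β/Real.sqrt c))) ∧
    (α = 0 → ∀ τ₁ ∈ Set.Ico (0:ℝ) (β/Real.sqrt c), ∀ τ₂ ∈ Set.Ico (0:ℝ) (β/Real.sqrt c),
      I τ₁ = I τ₂) := by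
  intro ψ I
  have hα' : 0 < 1 - α := sub_pos.mpr hα
  have hpos : ∀ τ ∈ Set.Ico (0:ℝ) (β/Real.sqrt c), 0 < τ + ψ τ := fun τ hτ =>
    add_pos_of_nonneg_of_pos hτ.1 (div_pos (sub_pos.mpr hτ.2) hα')
  have hdiff : ∀ x y, (y + ψ y) - (x + ψ x) = -α * (y - x) / (1 - α) := by
    intro x y
    simp only [ψ]
    field_simp
    ring
  have hlt : ∀ x ∈ Set.Ico (0:ℝ) (β/Real.sqrt c), ∀ y, x + ψ x < y + ψ y → I x < I y := by
    intro x hx y hxy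
    have hlog := Real.log_lt_log (div_pos (hpos x hx) hτθ) (div_lt_div_of_pos_right hxy hτθ)
    simp only [I]
    linarith
  refine ⟨fun τ hτ => ?_, fun h x hx y hy hxy => ?_, fun h x hx y hy hxy => ?_,
    fun h x hx y hy => ?_⟩
  · have hτ0 := hpos τ hτ
    have hψ : HasDerivAt ψ (-1 / (1 - α)) τ :=
      ((hasDerivAt_id τ).const_sub _).div_const _
    have hI := ((((hasDerivAt_id τ).add hψ).div_const τθ).log
      (div_pos hτ0 hτθ).ne').const_mul (1 / 2)
    refine hI.congr_deriv ?_
    simp only [Pi.add_apply, id_eq]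
    generalize τ + ψ τ = u at hτ0
    field_simp
    ring
  · refine hlt x hx y (sub_pos.mp ?_)
    rw [hdiff]
    exact div_pos (mul_pos (neg_pos.mpr h) (sub_pos.mpr hxy)) hα'
  · refine hlt y hy x (sub_neg.mp ?_)
    rw [hdiff]
    exact div_neg_of_neg_of_pos (mul_neg_of_neg_of_pos (neg_neg_of_pos h) (sub_pos.mpr hxy)) hα'
  · have hxy : x + ψ x = y + ψ y := by
      simp [ψ, h]
    simp only [I, hxy]
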